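/- Let f(x,y) = x² + b₀x³+b₁x²y+b₂xy²+c₀x⁴+c₁x³y+c₂x²y²+c₃xy³+c₄y⁴ + h.o.t. be a hyperbolic cusp of Gauss (b₂² − 4c₄ > 0). Then the zero level set f = 0 has exactly two smooth branches through the origin, both tangent to x = 0, with expansions x = −(1/2)(b₂ − √(b₂²−4c₄)) y² + O(y³) and x = −(1/2)(b₂ + √(b₂²−4c₄)) y² + O(y³). -/

import Mathlib

open Topology Asymptotics Filter

/-- Partial derivative with respect to the first variable. -/
noncomputable def px (f : ℝ → ℝ → ℝ) : ℝ → ℝ → ℝ := fun x y => deriv (fun x' => f x' y) x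

/-- Partial derivative with respect to the second variable. -/
noncomputable def py (f : ℝ → ℝ → ℝ) : ℝ → ℝ → ℝ := fun x y => deriv (fun y' => f x y') y

/-- The vertex function `V_f`. -/
noncomputable def Vf (f : ℝ → ℝ → ℝ) (x y : ℝ) : ℝ :=
  (px f x y ^ 2 + py f x y ^ 2) *
      (-(py f x y ^ 3) * px (px (px f)) x y + 3 * px f x y * py f x y ^ 2 * py (px (px f)) x y
        - 3 * px f x y ^ 2 * py f x y * py (py (px f)) x y + px f x y ^ 3 * py (py (py f)) x y)
  + 3 * px f x y * py f x y *
      (py f x y ^ 2 * px (px f) x y ^ 2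
        + (px f x y ^ 2 + py f x y ^ 2) * px (px f) x y * py (py f) x y
        - px f x y ^ 2 * py (py f) x y ^ 2)
  + 6 * px f x y * py f x y * py (px f) x y ^ 2 * (px f x y ^ 2 - py f x y ^ 2)
  + 3 * py (px f) x y *
      (px (px f) x y * py f x y ^ 4
        - 3 * px f x y ^ 2 * py f x y ^ 2 * (px (px f) x y - py (py f) x y)
        - py (py f) x y * px f x y ^ 4)

/-- The inflexion (Hessian-type) function `I_f`. -/
noncomputable def Infl (f : ℝ → ℝ → ℝ) (x y : ℝ) : ℝ :=
  px (px f) x y * py f x y ^ 2 - 2 * py (px f) x y * px f x y * py f x y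
    + py (py f) x y * px f x y ^ 2

/-- Curvature of the graph `y = h x`. -/
noncomputable def curvGraph (h : ℝ → ℝ) (x : ℝ) : ℝ :=
  deriv (deriv h) x / (1 + (deriv h x) ^ 2) ^ ((3 : ℝ) / 2)

theorem cg_param_nat (n : ℕ) : ∀ {F : Type} [NormedAddCommGroup F] [NormedSpace ℝ F]
    [CompleteSpace F] (g : (ℝ × ℝ) × ℝ → F), ContDiff ℝ n g →
    ContDiff ℝ n (fun x => ∫ t in (0:ℝ)..1, g (x, t)) := by
  induction n with
  | zero =>
    intro F _ _ _ g hg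
    have hg' := hg.continuous
    refine contDiff_zero.2 ?_
    exact intervalIntegral.continuous_parametric_intervalIntegral_of_continuous'
      (f := fun x t => g (x, t)) (by simpa [Function.uncurry_def] using hg') 0 1
  | succ n ih =>
    intro F _ _ _ g hg
    push_cast at hg ⊢
    have hd : Differentiable ℝ g := hg.differentiable (by simp)
    have hf' : ContDiff ℝ n (fderiv ℝ g) := hg.fderiv_right le_rfl
    have hg'c : ContDiff ℝ n (fun p => (fderiv ℝ g p).comp
        (ContinuousLinearMap.inl ℝ (ℝ × ℝ) ℝ)) := hf'.clm_comp contDiff_const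
    refine contDiff_succ_iff_hasFDerivAt.2 ⟨_, ih _ hg'c, ?_⟩
    intro x0
    obtain ⟨C, hC⟩ := ((isCompact_closedBall x0 1).prod
      (isCompact_Icc (a := (0:ℝ)) (b := 1))).exists_bound_of_continuousOn
        hg'c.continuous.continuousOn
    have hgc := hg.continuous
    have hgc' := hg'c.continuous
    refine intervalIntegral.hasFDerivAt_integral_of_dominated_of_fderiv_le
      (s := Metric.closedBall x0 1) (bound := fun _ => C)
      (F := fun x t => g (x, t))
      (F' := fun x t => (fderiv ℝ g (x, t)).comp (ContinuousLinearMap.inl ℝ (ℝ × ℝ) ℝ))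
      (Metric.closedBall_mem_nhds x0 one_pos) ?_ ?_ ?_ ?_ ?_ ?_
    · exact Eventually.of_forall fun x => (Continuous.aestronglyMeasurable (by fun_prop))
    · exact Continuous.intervalIntegrable (by fun_prop) _ _
    · exact Continuous.aestronglyMeasurable (hgc'.comp (by fun_prop : Continuous fun t : ℝ => (x0, t)))
    · refine Eventually.of_forall fun t ht x hx => hC (x, t) ⟨hx, ?_⟩
      rw [Set.uIoc_of_le zero_le_one] at ht
      exact ⟨ht.1.le, ht.2⟩
    · exact intervalIntegrable_const
    · refine Eventually.of_forall fun t ht x hx => ?_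
      exact (hd (x, t)).hasFDerivAt.comp x (hasFDerivAt_prodMk_left x t)

theorem cg_param (g : (ℝ × ℝ) × ℝ → ℝ) (hg : ContDiff ℝ (⊤ : ℕ∞) g) :
    ContDiff ℝ (⊤ : ℕ∞) (fun x => ∫ t in (0:ℝ)..1, g (x, t)) := by
  rw [contDiff_infty] at hg ⊢
  exact fun n => cg_param_nat n g (hg n)

theorem cg_hadamard (G : ℝ × ℝ → ℝ) (hG : ContDiff ℝ (⊤ : ℕ∞) G) (h0 : ∀ z, G (0, z) = 0) :
    ∃ H : ℝ × ℝ → ℝ, ContDiff ℝ (⊤ : ℕ∞) H ∧ ∀ y z, G (y, z) = y * H (y, z) := by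
  have hf' : ContDiff ℝ (⊤ : ℕ∞) (fderiv ℝ G) := hG.fderiv_right (by simp)
  have hd : Differentiable ℝ G := hG.differentiable (by simp)
  have hg : ContDiff ℝ (⊤ : ℕ∞)
      (fun p : (ℝ × ℝ) × ℝ => fderiv ℝ G (p.2 * p.1.1, p.1.2) (1, 0)) := by
    refine (hf'.comp (?_ : ContDiff ℝ (⊤ : ℕ∞)
      (fun p : (ℝ × ℝ) × ℝ => (p.2 * p.1.1, p.1.2)))).clm_apply contDiff_const
    fun_prop
  refine ⟨_, cg_param _ hg, ?_⟩
  intro y z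
  have hder : ∀ t ∈ Set.uIcc (0:ℝ) 1, HasDerivAt (fun t : ℝ => G (t * y, z))
      (y * fderiv ℝ G (t * y, z) (1, 0)) t := by
    intro t _
    have h1 : HasDerivAt (fun t : ℝ => ((t * y, z) : ℝ × ℝ)) (1 * y, 0) t :=
      ((hasDerivAt_id t).mul_const y).prodMk (hasDerivAt_const t z)
    have h2 := (hd (t * y, z)).hasFDerivAt.comp_hasDerivAt t h1
    have h3 : ((1 * y, 0) : ℝ × ℝ) = y • (1, 0) := by simp
    rw [h3, map_smul] at h2
    exact h2
  have hc : Continuous (fun t : ℝ => y * fderiv ℝ G (t * y, z) (1, 0)) := by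
    have := hg.continuous.comp (by fun_prop : Continuous fun t : ℝ => (((y, z), t) : (ℝ × ℝ) × ℝ))
    exact continuous_const.mul this
  have := intervalIntegral.integral_eq_sub_of_hasDerivAt hder (hc.intervalIntegrable _ _)
  rw [intervalIntegral.integral_const_mul] at this
  simp only [one_mul, zero_mul, h0, sub_zero] at this
  exact this.symm

theorem cg_div (n : ℕ) : ∀ (G : ℝ × ℝ → ℝ), ContDiff ℝ (⊤ : ℕ∞) G →
    (∀ z, (fun y => G (y, z)) =o[𝓝[≠] (0:ℝ)] fun y => y ^ n) →
    ∃ H : ℝ × ℝ → ℝ, ContDiff ℝ (⊤ : ℕ∞) H ∧ (∀ y z, G (y, z) = y ^ n * H (y, z)) ∧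
      ∀ z, H (0, z) = 0 := by
  have key : ∀ (G : ℝ × ℝ → ℝ), ContDiff ℝ (⊤ : ℕ∞) G → ∀ z, 
      Tendsto (fun y => G (y, z)) (𝓝[≠] (0:ℝ)) (𝓝 0) → G (0, z) = 0 := by
    intro G hG z h
    have hc : Continuous (fun y => G (y, z)) := hG.continuous.comp (by fun_prop)
    exact tendsto_nhds_unique ((hc.tendsto 0).mono_left nhdsWithin_le_nhds) h
  induction n with
  | zero =>
    intro G hG ho
    refine ⟨G, hG, by simp, fun z => key G hG z ?_⟩
    have := ho z
    simp only [pow_zero] at this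
    exact (isLittleO_one_iff ℝ).1 this
  | succ n ih =>
    intro G hG ho
    have h0 : ∀ z, G (0, z) = 0 := fun z => key G hG z <| by
      refine (ho z).trans_tendsto ?_
      have : Continuous (fun y : ℝ => y ^ (n+1)) := by fun_prop
      have := this.tendsto 0
      simp only [ne_eq, Nat.add_eq_zero_iff, one_ne_zero, and_false, not_false_eq_true, zero_pow] at this
      exact this.mono_left nhdsWithin_le_nhds
    obtain ⟨G1, hG1, hG1e⟩ := cg_hadamard G hG h0
    obtain ⟨H, hH, hHe, hH0⟩ := ih G1 hG1 (fun z => by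
      refine isLittleO_iff.2 fun c hc => ?_
      filter_upwards [isLittleO_iff.1 (ho z) hc, self_mem_nhdsWithin] with y hy hy0
      have hy0 : 0 < ‖y‖ := norm_pos_iff.2 hy0
      rw [hG1e, norm_mul, pow_succ, norm_mul] at hy
      refine le_of_mul_le_mul_left ?_ hy0
      linarith)
    refine ⟨H, hH, fun y z => ?_, hH0⟩
    rw [hG1e, hHe]; ring

theorem cg_inv (F : ℝ × ℝ → ℝ) (u : ℝ × ℝ) (h : fderiv ℝ F u (0, 1) ≠ 0) :
    (fderiv ℝ F u ∘L .inr ℝ ℝ ℝ).IsInvertible := by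
  refine ⟨ContinuousLinearEquiv.unitsEquivAut ℝ (Units.mk0 _ h), ?_⟩
  ext
  simp

theorem cg_implicit (F : ℝ × ℝ → ℝ) (hF : ContDiff ℝ (⊤ : ℕ∞) F) (z0 d : ℝ)
    (h0 : F (0, z0) = 0) (hd : HasDerivAt (fun z => F (0, z)) d z0) (hd0 : d ≠ 0) :
    ∃ ζ : ℝ → ℝ, ContDiff ℝ (⊤ : ℕ∞) ζ ∧ ζ 0 = z0 ∧
      ∀ᶠ v in 𝓝 ((0, z0) : ℝ × ℝ), F v = 0 ↔ ζ v.1 = v.2 := by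
  have hdF : Differentiable ℝ F := hF.differentiable (by simp)
  have hf' : ContDiff ℝ (⊤ : ℕ∞) (fderiv ℝ F) := hF.fderiv_right (by simp)
  have hn : ((⊤ : ℕ∞) : WithTop ℕ∞) ≠ 0 := by simp
  have hne : fderiv ℝ F (0, z0) (0, 1) ≠ 0 := by
    have h1 : HasDerivAt (fun z : ℝ => ((0, z) : ℝ × ℝ)) (0, 1) z0 :=
      (hasDerivAt_const z0 (0:ℝ)).prodMk (hasDerivAt_id z0)
    have h2 := (hdF (0, z0)).hasFDerivAt.comp_hasDerivAt z0 h1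
    rw [h2.unique hd]
    exact hd0
  have hcd : ∀ u, ContDiffAt ℝ (⊤ : ℕ∞) F u := fun u => hF.contDiffAt
  set ψ := (hcd (0, z0)).implicitFunction hn (cg_inv F _ hne) with hψ
  have hψ0 : ψ 0 = z0 := (hcd (0, z0)).implicitFunction_apply_self hn (cg_inv F _ hne)
  have hψc : ContDiffAt ℝ (⊤ : ℕ∞) ψ 0 :=
    (hcd (0, z0)).contDiffAt_implicitFunction hn (cg_inv F _ hne)
  have hψiff : ∀ᶠ v in 𝓝 ((0, z0) : ℝ × ℝ), F v = 0 ↔ ψ v.1 = v.2 := by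
    have := (hcd (0, z0)).eventually_apply_eq_iff_implicitFunction hn (cg_inv F _ hne)
    rwa [h0] at this
  -- near 0 the function is smooth
  have hcont : ∀ᶠ y in 𝓝 (0:ℝ), ContinuousAt ψ y := by
    have h1 : ContDiffAt ℝ 1 ψ 0 := hψc.of_le (by exact_mod_cast le_top)
    filter_upwards [h1.eventually (by simp)] with y hy using hy.continuousAt
  have hgr : Tendsto (fun y => (y, ψ y)) (𝓝 0) (𝓝 ((0, z0) : ℝ × ℝ)) := by
    have : ContinuousAt (fun y => (y, ψ y)) (0:ℝ) := continuousAt_id.prodMk hψc.continuousAt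
    simpa [ContinuousAt, hψ0] using this
  have hnear : ∀ᶠ y in 𝓝 (0:ℝ), fderiv ℝ F (y, ψ y) (0, 1) ≠ 0 := by
    have hc : Continuous (fun v => fderiv ℝ F v (0, 1)) := by
      have := hf'.continuous
      fun_prop
    exact hgr.eventually (hc.continuousAt.eventually_ne hne)
  have hiff2 := hgr.eventually hψiff.eventually_nhds
  have hsm : ∀ᶠ y in 𝓝 (0:ℝ), ContDiffAt ℝ (⊤ : ℕ∞) ψ y := by
    filter_upwards [hcont, hnear, hiff2] with y hy1 hy2 hy3
    have hFy : F (y, ψ y) = 0 := hy3.self_of_nhds.2 rfl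
    have hA := (hcd (y, ψ y)).contDiffAt_implicitFunction hn (cg_inv F _ hy2)
    have hB := (hcd (y, ψ y)).eventually_apply_eq_iff_implicitFunction hn (cg_inv F _ hy2)
    rw [hFy] at hB
    refine hA.congr_of_eventuallyEq ?_
    have hgy : Tendsto (fun y => (y, ψ y)) (𝓝 y) (𝓝 (y, ψ y)) :=
      continuousAt_id.prodMk hy1
    filter_upwards [hgy.eventually hB, hgy.eventually hy3] with w hw1 hw2
    exact (hw1.1 (hw2.2 rfl)).symm
  obtain ⟨r, hr, hball⟩ := Metric.eventually_nhds_iff_ball.1 hsm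
  let χ : ContDiffBump (0:ℝ) := ⟨r / 4, r / 2, by positivity, by linarith⟩
  refine ⟨fun y => χ y * ψ y, ?_, ?_, ?_⟩
  · rw [contDiff_iff_contDiffAt]
    intro y
    by_cases hy : y ∈ Metric.ball (0:ℝ) r
    · exact χ.contDiffAt.mul (hball y hy)
    · have : y ∉ tsupport χ := by
        rw [χ.tsupport_eq]
        intro h
        apply hy
        have h' : dist y 0 ≤ r / 2 := h
        exact lt_of_le_of_lt h' (by linarith)
      have h2 := notMem_tsupport_iff_eventuallyEq.1 this
      refine (contDiffAt_const (c := (0:ℝ))).congr_of_eventuallyEq ?_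
      filter_upwards [h2] with w hw
      simp [hw]
  · simp [χ.eventuallyEq_one.self_of_nhds, hψ0]
  · have : ∀ᶠ v : ℝ × ℝ in 𝓝 ((0, z0) : ℝ × ℝ), χ v.1 = 1 :=
      (continuous_fst.tendsto ((0, z0) : ℝ × ℝ)).eventually χ.eventuallyEq_one
    filter_upwards [this, hψiff] with v h1 h2
    rw [h1, one_mul, h2]

theorem cg_second (ζ : ℝ → ℝ) (hζ : ContDiff ℝ (⊤ : ℕ∞) ζ) :
    ContDiff ℝ (⊤ : ℕ∞) (fun y => ζ y * y ^ 2) ∧ deriv (fun y => ζ y * y ^ 2) 0 = 0 ∧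
    deriv (deriv (fun y => ζ y * y ^ 2)) 0 / 2 = ζ 0 := by
  have hd : Differentiable ℝ ζ := hζ.differentiable (by simp)
  have hd' : Differentiable ℝ (deriv ζ) :=
    (contDiff_infty_iff_deriv.1 hζ).2.differentiable (by simp)
  have e : deriv (fun y => ζ y * y ^ 2) = fun y => deriv ζ y * y ^ 2 + ζ y * (2 * y) := by
    funext y
    have := ((hd y).hasDerivAt.mul (hasDerivAt_pow 2 y)).deriv
    simp only [Pi.mul_def] at this
    simpa using this
  refine ⟨by fun_prop, by simp [e], ?_⟩
  rw [e]
  have h := (((hd' 0).hasDerivAt.mul (hasDerivAt_pow 2 (0:ℝ))).add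
    ((hd 0).hasDerivAt.mul ((hasDerivAt_id (0:ℝ)).const_mul 2))).deriv
  have h' : deriv (fun y => deriv ζ y * y ^ 2 + ζ y * (2 * y)) 0 = ζ 0 * 2 := by
    simp only [Pi.mul_def, Pi.add_def] at h
    simpa using h
  rw [h']; ring

set_option maxHeartbeats 1000000 in
theorem cg_bound (R : ℝ → ℝ → ℝ) (b0 b1 b2 c0 c1 c2 c3 c4 : ℝ)
    (hRo : (fun p : ℝ × ℝ => R p.1 p.2) =o[𝓝 (0 : ℝ × ℝ)] fun p => ‖p‖ ^ 4) :
    ∃ δ > 0, ∃ K, ∀ x y : ℝ, |x| < δ → |y| < δ →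
      x ^ 2 + b0 * x ^ 3 + b1 * x ^ 2 * y + b2 * x * y ^ 2
      + c0 * x ^ 4 + c1 * x ^ 3 * y + c2 * x ^ 2 * y ^ 2 + c3 * x * y ^ 3 + c4 * y ^ 4 + R x y = 0 →
      |x| ≤ K * y ^ 2 := by
  obtain ⟨r, hr, hball⟩ := Metric.eventually_nhds_iff_ball.1 (isLittleO_iff.1 hRo one_pos)
  set M := |b0| + |b1| + |c0| + |c1| + |c2| + 1 with hM
  have hMpos : 0 < M := by positivity
  set A := |b2| + |c3| with hA
  set B := |c4| + 1 with hB
  have hA0 : 0 ≤ A := by positivity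
  have hB0 : 0 < B := by positivity
  refine ⟨min r (min 1 (1 / (2 * M))), by positivity, 2 * A + 2 * B + 1, ?_⟩
  intro x y hx hy h
  obtain ⟨hx1, hx2, hx3⟩ : |x| < r ∧ |x| < 1 ∧ |x| < 1 / (2 * M) := by
    simpa [lt_min_iff] using hx
  obtain ⟨hy1, hy2, hy3⟩ : |y| < r ∧ |y| < 1 ∧ |y| < 1 / (2 * M) := by
    simpa [lt_min_iff] using hy
  have hRb : |R x y| ≤ x ^ 4 + y ^ 4 := by
    have h1 := hball (x, y) (by
      rw [mem_ball_zero_iff, Prod.norm_def]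
      exact max_lt hx1 hy1)
    simp only [Prod.norm_def, Real.norm_eq_abs, one_mul, abs_pow] at h1
    refine h1.trans ?_
    have ex : |x| ^ 4 = x ^ 4 := by rw [← abs_pow]; exact abs_of_nonneg (by positivity)
    have ey : |y| ^ 4 = y ^ 4 := by rw [← abs_pow]; exact abs_of_nonneg (by positivity)
    rcases max_cases |x| |y| with ⟨e, _⟩ | ⟨e, _⟩ <;> rw [e, abs_abs]
    · rw [ex]; have : 0 ≤ y ^ 4 := by positivity
      linarith
    · rw [ey]; have : 0 ≤ x ^ 4 := by positivity
      linarith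
  set s := 1 / (2 * M) with hs
  have hsM : s * M = 1 / 2 := by rw [hs]; field_simp
  have hs0 : 0 < s := by positivity
  have ax := abs_nonneg x
  have ay := abs_nonneg y
  have sq : |x| * |x| = x ^ 2 := by rw [abs_mul_abs_self]; ring
  have sqy : |y| * |y| = y ^ 2 := by rw [abs_mul_abs_self]; ring
  -- the small factor
  have hsmall : |b0 * x + b1 * y + c0 * x ^ 2 + c1 * (x * y) + c2 * y ^ 2| + x ^ 2 ≤ 1 / 2 := by
    have t1 : |b0 * x| ≤ |b0| * s := by rw [abs_mul]; gcongr
    have t2 : |b1 * y| ≤ |b1| * s := by rw [abs_mul]; gcongr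
    have q1 : x ^ 2 ≤ s := by rw [← sq]; nlinarith
    have q2 : y ^ 2 ≤ s := by rw [← sqy]; nlinarith
    have q3 : |x| * |y| ≤ s := by nlinarith
    have t3 : |c0 * x ^ 2| ≤ |c0| * s := by
      rw [abs_mul, abs_of_nonneg (sq_nonneg x)]; gcongr
    have t4 : |c1 * (x * y)| ≤ |c1| * s := by rw [abs_mul, abs_mul]; gcongr
    have t5 : |c2 * y ^ 2| ≤ |c2| * s := by
      rw [abs_mul, abs_of_nonneg (sq_nonneg y)]; gcongr
    have := abs_add_le (b0 * x + b1 * y + c0 * x ^ 2 + c1 * (x * y)) (c2 * y ^ 2)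
    have := abs_add_le (b0 * x + b1 * y + c0 * x ^ 2) (c1 * (x * y))
    have := abs_add_le (b0 * x + b1 * y) (c0 * x ^ 2)
    have := abs_add_le (b0 * x) (b1 * y)
    rw [← hsM, hM]
    linarith
  set S := b0 * x + b1 * y + c0 * x ^ 2 + c1 * (x * y) + c2 * y ^ 2 with hS
  have hy20 : 0 ≤ y ^ 2 := sq_nonneg y
  have u1 : |b2 * x * y ^ 2| = |b2| * (|x| * y ^ 2) := by
    rw [abs_mul, abs_mul, abs_of_nonneg hy20]; ring
  have u2 : |c3 * x * y ^ 3| ≤ |c3| * (|x| * y ^ 2) := by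
    have : |c3 * x * y ^ 3| = |c3| * (|x| * y ^ 2) * |y| := by
      rw [show c3 * x * y ^ 3 = c3 * x * y ^ 2 * y by ring, abs_mul, abs_mul, abs_mul,
        abs_of_nonneg hy20]; ring
    rw [this]
    have : 0 ≤ |c3| * (|x| * y ^ 2) := by positivity
    exact mul_le_of_le_one_right this hy2.le
  have u3 : |c4 * y ^ 4| = |c4| * y ^ 4 := by
    rw [abs_mul, abs_of_nonneg (by positivity : (0:ℝ) ≤ y ^ 4)]
  have main : x ^ 2 / 2 ≤ A * (|x| * y ^ 2) + B * y ^ 4 := by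
    have e : x ^ 2 * (1 + S) = -(b2 * x * y ^ 2 + c3 * x * y ^ 3 + c4 * y ^ 4 + R x y) := by
      rw [hS]; linarith
    have v1 := neg_abs_le (b2 * x * y ^ 2)
    have v2 := neg_abs_le (c3 * x * y ^ 3)
    have v3 := neg_abs_le (c4 * y ^ 4)
    have v4 := neg_abs_le (R x y)
    have v5 := neg_abs_le S
    have w : x ^ 2 * (1 / 2 + x ^ 2) ≤ x ^ 2 * (1 + S) := by
      apply mul_le_mul_of_nonneg_left _ (sq_nonneg x)
      linarith
    rw [hA, hB]
    linarith
  by_contra hcon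
  push Not at hcon
  have hxpos : 0 < |x| := lt_of_le_of_lt (by positivity) hcon
  have p1 : |x| * ((2 * A + 2 * B + 1) * y ^ 2) < |x| * |x| :=
    mul_lt_mul_of_pos_left hcon hxpos
  have p2 : (2 * A + 2 * B + 1) * y ^ 2 * y ^ 2 ≤ |x| * y ^ 2 :=
    mul_le_mul_of_nonneg_right hcon.le hy20
  have p3 : y ^ 2 * y ^ 2 ≤ |x| * y ^ 2 := by
    refine le_trans ?_ p2
    have : 0 ≤ y ^ 2 * y ^ 2 := by positivity
    nlinarith
  have p4 : 0 ≤ |x| * y ^ 2 := by positivity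
  nlinarith [mul_le_mul_of_nonneg_left p3 hB0.le]

theorem hyperbolic_cusp_of_gauss_level_branches (f R : ℝ → ℝ → ℝ)
    (b0 b1 b2 c0 c1 c2 c3 c4 : ℝ) (hcog : 0 < b2 ^ 2 - 4 * c4)
    (hfR : ∀ x y, f x y = x ^ 2 + b0 * x ^ 3 + b1 * x ^ 2 * y + b2 * x * y ^ 2
      + c0 * x ^ 4 + c1 * x ^ 3 * y + c2 * x ^ 2 * y ^ 2 + c3 * x * y ^ 3 + c4 * y ^ 4 + R x y)
    (hR : ContDiff ℝ (⊤ : ℕ∞) (fun p : ℝ × ℝ => R p.1 p.2))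
    (hRo : (fun p : ℝ × ℝ => R p.1 p.2) =o[𝓝 (0 : ℝ × ℝ)] fun p => ‖p‖ ^ 4) :
    ∃ ε > (0 : ℝ), ∃ φ1 φ2 : ℝ → ℝ,
      ContDiff ℝ (⊤ : ℕ∞) φ1 ∧ ContDiff ℝ (⊤ : ℕ∞) φ2
      ∧ φ1 0 = 0 ∧ deriv φ1 0 = 0 ∧ φ2 0 = 0 ∧ deriv φ2 0 = 0
      ∧ deriv (deriv φ1) 0 / 2 = -(1 / 2) * (b2 - Real.sqrt (b2 ^ 2 - 4 * c4))
      ∧ deriv (deriv φ2) 0 / 2 = -(1 / 2) * (b2 + Real.sqrt (b2 ^ 2 - 4 * c4))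
      ∧ (∀ y : ℝ, |y| < ε → f (φ1 y) y = 0 ∧ f (φ2 y) y = 0)
      ∧ ∀ x y : ℝ, x ^ 2 + y ^ 2 < ε ^ 2 → (f x y = 0 ↔ x = φ1 y ∨ x = φ2 y) := by
  set D := Real.sqrt (b2 ^ 2 - 4 * c4) with hD
  have hDpos : 0 < D := Real.sqrt_pos.2 hcog
  have hDsq : D ^ 2 = b2 ^ 2 - 4 * c4 := Real.sq_sqrt hcog.le
  have hG : ContDiff ℝ (⊤ : ℕ∞) (fun p : ℝ × ℝ => R (p.2 * p.1 ^ 2) p.1) :=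
    hR.comp (by fun_prop : ContDiff ℝ (⊤ : ℕ∞) (fun p : ℝ × ℝ => (p.2 * p.1 ^ 2, p.1)))
  obtain ⟨H, hH, hHe, hH0⟩ := cg_div 4 _ hG (fun z => by
    have hc : Continuous (fun y : ℝ => ((z * y ^ 2, y) : ℝ × ℝ)) := by fun_prop
    have ht : Tendsto (fun y : ℝ => ((z * y ^ 2, y) : ℝ × ℝ)) (𝓝 0) (𝓝 0) := by
      have := hc.tendsto' 0 0 (by simp)
      exact this
    have h1 := hRo.comp_tendsto ht
    refine (h1.trans_isBigO ?_).mono nhdsWithin_le_nhds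
    refine IsBigO.pow (f := fun y : ℝ => ‖((z * y ^ 2, y) : ℝ × ℝ)‖) (g := fun y : ℝ => y) ?_ 4
    refine IsBigO.norm_left (IsBigO.prod_left ?_ (isBigO_refl _ _))
    have h2 : (fun y : ℝ => z * y) =O[𝓝 0] (fun _ => (1 : ℝ)) :=
      (by fun_prop : Continuous (fun y : ℝ => z * y)).continuousAt.isBigO_one ℝ
    have h3 := h2.mul (isBigO_refl (fun y : ℝ => y) (𝓝 0))
    simpa [pow_two, mul_assoc] using h3)
  simp only at hHe
  set F : ℝ × ℝ → ℝ := fun p => p.2 ^ 2 + b2 * p.2 + c4 + b0 * p.2 ^ 3 * p.1 ^ 2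
    + b1 * p.2 ^ 2 * p.1 + c0 * p.2 ^ 4 * p.1 ^ 4 + c1 * p.2 ^ 3 * p.1 ^ 3
    + c2 * p.2 ^ 2 * p.1 ^ 2 + c3 * p.2 * p.1 + H p with hFdef
  have hF : ContDiff ℝ (⊤ : ℕ∞) F := by fun_prop
  have hfF : ∀ z y, f (z * y ^ 2) y = y ^ 4 * F (y, z) := by
    intro z y
    rw [hfR, hHe]
    simp only [hFdef]
    ring
  have hF0 : ∀ z, F (0, z) = z ^ 2 + b2 * z + c4 := by
    intro z
    simp [hFdef, hH0]
  have hder : ∀ z, HasDerivAt (fun z => F (0, z)) (2 * z + b2) z := by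
    intro z
    simp only [hF0]
    have := (((hasDerivAt_pow 2 z).add ((hasDerivAt_id z).const_mul b2)).add_const c4)
    simpa using this
  obtain ⟨ζ1, hζ1, hζ10, hiff1⟩ := cg_implicit F hF (-(1 / 2) * (b2 - D)) _
    (by rw [hF0]; linear_combination hDsq / 4) (hder _) (by ring_nf; exact hDpos.ne')
  obtain ⟨ζ2, hζ2, hζ20, hiff2⟩ := cg_implicit F hF (-(1 / 2) * (b2 + D)) _
    (by rw [hF0]; linear_combination hDsq / 4) (hder _)
    (by ring_nf; exact neg_ne_zero.2 hDpos.ne')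
  have hsol : ∀ (ζ : ℝ → ℝ) (z0 : ℝ), ContDiff ℝ (⊤ : ℕ∞) ζ → ζ 0 = z0 →
      (∀ᶠ v in 𝓝 ((0, z0) : ℝ × ℝ), F v = 0 ↔ ζ v.1 = v.2) →
      ∀ᶠ y in 𝓝 (0 : ℝ), F (y, ζ y) = 0 := by
    intro ζ z0 hζ h0 hi
    have hc : Continuous (fun y => (y, ζ y)) := continuous_id.prodMk hζ.continuous
    have ht := hc.tendsto 0
    rw [h0] at ht
    filter_upwards [ht.eventually hi] with y hy using hy.2 rfl
  obtain ⟨δ, hδ, K, hK⟩ := cg_bound R b0 b1 b2 c0 c1 c2 c3 c4 hRo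
  have htube : ∀ᶠ y in 𝓝 (0:ℝ), ∀ z ∈ Set.Icc (-K) K, F (y, z) = 0 → z = ζ1 y ∨ z = ζ2 y := by
    refine isCompact_Icc.eventually_forall_of_forall_eventually fun z _ => ?_
    by_cases h1 : z = -(1 / 2) * (b2 - D)
    · subst h1
      filter_upwards [hiff1] with v hv h using Or.inl (hv.1 h).symm
    by_cases h2 : z = -(1 / 2) * (b2 + D)
    · subst h2
      filter_upwards [hiff2] with v hv h using Or.inr (hv.1 h).symm
    have hne : F (0, z) ≠ 0 := by
      rw [hF0]
      have : z ^ 2 + b2 * z + c4 = (z - -(1 / 2) * (b2 - D)) * (z - -(1 / 2) * (b2 + D)) := by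
        linear_combination hDsq / 4
      rw [this]
      exact mul_ne_zero (sub_ne_zero.2 h1) (sub_ne_zero.2 h2)
    filter_upwards [hF.continuous.continuousAt.eventually_ne hne] with v hv h
    exact absurd h hv
  obtain ⟨r, hr, hball⟩ := Metric.eventually_nhds_iff_ball.1
    ((hsol ζ1 _ hζ1 hζ10 hiff1).and ((hsol ζ2 _ hζ2 hζ20 hiff2).and htube))
  obtain ⟨k1, k2, k3⟩ := cg_second ζ1 hζ1
  obtain ⟨l1, l2, l3⟩ := cg_second ζ2 hζ2
  have hex : ∀ y : ℝ, |y| < min r δ → f (ζ1 y * y ^ 2) y = 0 ∧ f (ζ2 y * y ^ 2) y = 0 := by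
    intro y hy
    have hb := hball y (by
      rw [mem_ball_zero_iff]
      exact lt_of_lt_of_le hy (min_le_left _ _))
    rw [hfF, hfF, hb.1, hb.2.1]
    simp
  refine ⟨min r δ, by positivity, fun y => ζ1 y * y ^ 2, fun y => ζ2 y * y ^ 2, k1, l1,
    by simp, k2, by simp, l2, by rw [k3, hζ10], by rw [l3, hζ20], hex, ?_⟩
  intro x y hxy
  have hε : 0 < min r δ := by positivity
  have hx : |x| < min r δ := abs_lt_of_sq_lt_sq (by nlinarith [sq_nonneg y]) hε.le
  have hy : |y| < min r δ := abs_lt_of_sq_lt_sq (by nlinarith [sq_nonneg x]) hε.le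
  constructor
  · intro h
    have hb := hK x y (lt_of_lt_of_le hx (min_le_right _ _)) (lt_of_lt_of_le hy (min_le_right _ _))
      (by rw [← hfR]; exact h)
    by_cases hy0 : y = 0
    · subst hy0
      left
      have : |x| ≤ 0 := by simpa using hb
      simpa using this
    have hy2 : 0 < y ^ 2 := by positivity
    have hxz : x = x / y ^ 2 * y ^ 2 := by field_simp
    have hz : |x / y ^ 2| ≤ K := by
      rw [abs_div, abs_of_pos hy2]
      exact (div_le_iff₀ hy2).2 hb
    have hFz : F (y, x / y ^ 2) = 0 := by
      rw [hxz, hfF] at h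
      exact (mul_eq_zero.1 h).resolve_left (by positivity)
    have hb2 := (hball y (by
      rw [mem_ball_zero_iff]
      exact lt_of_lt_of_le hy (min_le_left _ _))).2.2 _ (abs_le.1 hz) hFz
    rcases hb2 with e | e
    · left; rw [e] at hxz; exact hxz
    · right; rw [e] at hxz; exact hxz
  · rintro (e | e)
    · rw [e]; exact (hex y hy).1
    · rw [e]; exact (hex y hy).2
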